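/- arXiv:2111.07399 — 4 statements merged into one kernel-verified Lean document; each statement's English description precedes it below -/
import Mathlib

section
/- Let c : ℕ → ℕ → ℝ be a family of scalars with K := sup_{i ∈ ℕ} ∑_k |c_{ki}|² < ∞. Then for all v, w ∈ ℓ²(ℕ), the sequence u defined by u_k = ∑_i v_i w_i c_{ki} is a well-defined element of ℓ²(ℕ), and ‖u‖ ≤ √K ‖v‖ ‖w‖; in particular, for each fixed v the left multiplication operator w ↦ u is a bounded linear operator on ℓ²(ℕ). -/
noncomputable section
open scoped ENNReal

/-- The real Hilbert space ℓ²(ℕ) of square-summable sequences. -/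
abbrev l2 : Type := lp (fun _ : ℕ => ℝ) 2

/-!
The columns `C i = (c k i)_k` are vectors of ℓ² with `‖C i‖ ≤ √K`. By Hölder's inequality
`∑ |v i * w i| ≤ ‖v‖ ‖w‖`, so `∑ (v i * w i) • C i` converges absolutely in ℓ², with norm at most
`√K ‖v‖ ‖w‖`. Coordinate evaluations are continuous, so the `k`-th coordinate of this vector-valued
sum is the scalar series `∑ v i * w i * c k i`.
-/

open scoped NNReal

section MulSMulRight

variable {𝕜 H : Type*} [NontriviallyNormedField 𝕜] [NormedAddCommGroup H] [NormedSpace 𝕜 H]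

/-- The bilinear map `(a, b) ↦ (a * b) • x` attached to a vector `x`: the contribution of a single
basis vector with square `x` to the product of an evolution algebra. -/
def mulSMulRight (x : H) : 𝕜 →L[𝕜] 𝕜 →L[𝕜] H :=
  (ContinuousLinearMap.toSpanSingleton 𝕜 x).postcomp 𝕜 ∘L ContinuousLinearMap.mul 𝕜 𝕜

lemma mulSMulRight_apply (x : H) (a b : 𝕜) : mulSMulRight x a b = (a * b) • x := rfl

lemma norm_mulSMulRight_le (x : H) : ‖mulSMulRight (𝕜 := 𝕜) x‖ ≤ ‖x‖ :=
  ContinuousLinearMap.opNorm_le_bound₂ _ (norm_nonneg x) fun a b => by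
    rw [mulSMulRight_apply, norm_smul, norm_mul, mul_comm, mul_assoc]

end MulSMulRight

section EvolutionMul

variable {ι 𝕜 H : Type*} [RCLike 𝕜] [NormedAddCommGroup H] [NormedSpace 𝕜 H] [CompleteSpace H]
  {p q : ℝ≥0∞} [Fact (1 ≤ p)] [Fact (1 ≤ q)] [p.HolderConjugate q] {K : ℝ≥0}

lemma hasSum_dualPairing {E F : ι → Type*}
    [∀ i, NormedAddCommGroup (E i)] [∀ i, NormedSpace 𝕜 (E i)]
    [∀ i, NormedAddCommGroup (F i)] [∀ i, NormedSpace 𝕜 (F i)]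
    (B : ∀ i, E i →L[𝕜] F i →L[𝕜] H) (hB : ∀ i, ‖B i‖ ≤ K) (e : lp E p) (f : lp F q) :
    HasSum (fun i => B i (e i) (f i)) (lp.dualPairing p q B hB e f) :=
  (lp.memℓp (lp.holder 1 B hB e f)).summable_of_one.hasSum

variable (𝕜 p q) in
/-- The product `(v, w) ↦ ∑ i, (v i * w i) • C i` of an evolution algebra whose `i`-th basis vector
has square `C i`, as a continuous bilinear map. The factors lie in sequence spaces with conjugate
exponents and the bounded family `C` in an arbitrary Banach space. -/
def evolutionMul (C : ι → H) (hC : ∀ i, ‖C i‖ ≤ K) :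
    lp (fun _ : ι => 𝕜) p →L[𝕜] lp (fun _ : ι => 𝕜) q →L[𝕜] H :=
  lp.dualPairing p q (fun i => mulSMulRight (C i)) fun i =>
    (norm_mulSMulRight_le (C i)).trans (hC i)

lemma hasSum_evolutionMul (C : ι → H) (hC : ∀ i, ‖C i‖ ≤ K)
    (v : lp (fun _ : ι => 𝕜) p) (w : lp (fun _ : ι => 𝕜) q) :
    HasSum (fun i => (v i * w i) • C i) (evolutionMul 𝕜 p q C hC v w) :=
  hasSum_dualPairing _ _ v w

lemma norm_evolutionMul_le (C : ι → H) (hC : ∀ i, ‖C i‖ ≤ K) :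
    ‖evolutionMul 𝕜 p q C hC‖ ≤ K :=
  lp.norm_dualPairing _ _

lemma norm_evolutionMul_apply_le (C : ι → H) (hC : ∀ i, ‖C i‖ ≤ K)
    (v : lp (fun _ : ι => 𝕜) p) (w : lp (fun _ : ι => 𝕜) q) :
    ‖evolutionMul 𝕜 p q C hC v w‖ ≤ K * ‖v‖ * ‖w‖ :=
  (evolutionMul 𝕜 p q C hC).le_of_opNorm₂_le_of_le (norm_evolutionMul_le C hC) le_rfl le_rfl

end EvolutionMul

section SquareSummable

variable {κ : Type*} {E : κ → Type*} [∀ k, NormedAddCommGroup (E k)]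

lemma memℓp_two_iff_summable_sq {f : ∀ k, E k} :
    Memℓp f 2 ↔ Summable fun k => ‖f k‖ ^ 2 := by
  simp [memℓp_gen_iff]

lemma lp_two_norm_eq_sqrt_tsum_sq (f : lp E 2) : ‖f‖ = √(∑' k, ‖f k‖ ^ 2) := by
  simp [lp.norm_eq_tsum_rpow, Real.sqrt_eq_rpow]

end SquareSummable

section Coordinates

variable {ι κ 𝕜 : Type*} [RCLike 𝕜] {E : κ → Type*}
  [∀ k, NormedAddCommGroup (E k)] [∀ k, NormedSpace 𝕜 (E k)] [∀ k, CompleteSpace (E k)]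
  {p q r : ℝ≥0∞} [Fact (1 ≤ p)] [Fact (1 ≤ q)] [Fact (1 ≤ r)] [p.HolderConjugate q]

lemma hasSum_evolutionMul_apply (C : ι → lp E r) {K : ℝ≥0}
    (hC : ∀ i, ‖C i‖ ≤ K) (v : lp (fun _ : ι => 𝕜) p) (w : lp (fun _ : ι => 𝕜) q) (k : κ) :
    HasSum (fun i => (v i * w i) • C i k) (evolutionMul 𝕜 p q C hC v w k) :=
  (hasSum_evolutionMul C hC v w).mapL (lp.evalCLM 𝕜 E r k)

theorem product_welldefined_of_bounded_columns_general
    (C : ι → lp E r) (K : ℝ≥0) (hC : ∀ i, ‖C i‖ ≤ K) :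
    (∀ (v : lp (fun _ : ι => 𝕜) p) (w : lp (fun _ : ι => 𝕜) q),
      ∃ u : lp E r,
        (∀ k, Summable fun i => (v i * w i) • C i k) ∧
        (∀ k, u k = ∑' i, (v i * w i) • C i k) ∧
        ‖u‖ ≤ K * ‖v‖ * ‖w‖) ∧
    (∀ v : lp (fun _ : ι => 𝕜) p, ∃ L : lp (fun _ : ι => 𝕜) q →L[𝕜] lp E r,
      ∀ (w : lp (fun _ : ι => 𝕜) q) (k : κ), L w k = ∑' i, (v i * w i) • C i k) := by
  have hsum := hasSum_evolutionMul_apply (𝕜 := 𝕜) (p := p) (q := q) C hC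
  exact ⟨fun v w => ⟨evolutionMul 𝕜 p q C hC v w, fun k => (hsum v w k).summable,
      fun k => (hsum v w k).tsum_eq.symm, norm_evolutionMul_apply_le C hC v w⟩,
    fun v => ⟨evolutionMul 𝕜 p q C hC v, fun w k => (hsum v w k).tsum_eq.symm⟩⟩

end Coordinates

/-- if the structure constants satisfy `K := sup_i ∑_k |c_{ki}|² < ∞`, then the
evolution-algebra product `u_k = ∑_i v_i w_i c_{ki}` of any `v, w ∈ ℓ²` is a well-defined
element of `ℓ²` with `‖u‖ ≤ √K ‖v‖ ‖w‖`; in particular every left multiplication is a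
bounded linear operator on `ℓ²`. -/
theorem product_welldefined_of_bounded_columns
    (c : ℕ → ℕ → ℝ) (K : ℝ)
    (hcol : ∀ i, Summable fun k => |c k i| ^ 2)
    (hbdd : BddAbove (Set.range fun i => ∑' k, |c k i| ^ 2))
    (hK : K = ⨆ i, ∑' k, |c k i| ^ 2) :
    (∀ v w : l2,
      ∃ u : l2,
        (∀ k, Summable fun i => v i * w i * c k i) ∧
        (∀ k, u k = ∑' i, v i * w i * c k i) ∧
        ‖u‖ ≤ Real.sqrt K * ‖v‖ * ‖w‖) ∧
    (∀ v : l2, ∃ L : l2 →L[ℝ] l2,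
      ∀ (w : l2) (k : ℕ), L w k = ∑' i, v i * w i * c k i) := by
  let C (i : ℕ) : l2 := ⟨fun k => c k i, memℓp_two_iff_summable_sq.2 (hcol i)⟩
  have hC (i : ℕ) : ‖C i‖ ≤ √K := by
    rw [lp_two_norm_eq_sqrt_tsum_sq, hK]
    exact Real.sqrt_le_sqrt (le_ciSup hbdd i)
  exact product_welldefined_of_bounded_columns_general C ⟨√K, K.sqrt_nonneg⟩ hC
end
end

section
/- Let G be a connected graph on ℕ with uniformly bounded degree. If G is regular or biregular, then there exists an isomorphism of Hilbert evolution algebras from A_RW(G) to A(G): a continuous linear bijection f : ℓ²(ℕ) → ℓ²(ℕ) with continuous inverse such that f(v ∘ w) = f(v) ⋆ f(w) for all v, w ∈ ℓ²(ℕ). -/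
/-!
The isomorphism is diagonal: `(f v)_i = c_i v_i` for positive weights `c` taking at most two
values. Comparing the coefficients of `v_i w_i` in coordinate `k`, such an `f` is multiplicative as
soon as `c_k = deg(i) c_i ^ 2` for every edge from `i` to `k`. On a `d`-regular graph `c = 1 / d`
works. On a `(d₁, d₂)`-biregular graph the two equations `c₂ = d₁ c₁ ^ 2` and `c₁ = d₂ c₂ ^ 2` are
solved by `c₁ = (d₁ ^ 2 d₂) ^ (-1/3)` and `c₂ = (d₁ d₂ ^ 2) ^ (-1/3)`.

The product `v ⋆ w` exists because it is the series `∑ v_i w_i (e_i ⋆ e_i)`, which converges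
absolutely in `ℓ¹ ⊆ ℓ²`: the coefficients are in `ℓ¹` and `e_i ⋆ e_i` has `ℓ¹` norm `deg(i)`. The
product `v ∘ w` is then `f⁻¹ (f v ⋆ f w)`.
-/

noncomputable section
open scoped ENNReal

/-- The degree of vertex `i` in the graph with adjacency coefficients `a`. -/
def deg (a : ℕ → ℕ → ℝ) (i : ℕ) : ℝ := ∑' k, a k i

/-- `a` is the adjacency function of a simple graph (0/1-valued, symmetric, no loops). -/
def SimpleAdj (a : ℕ → ℕ → ℝ) : Prop :=
  (∀ k i, a k i = 0 ∨ a k i = 1) ∧ (∀ k i, a k i = a i k) ∧ (∀ i, a i i = 0)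

/-- The graph is connected: any two vertices are joined by a finite path of edges. -/
def Connected (a : ℕ → ℕ → ℝ) : Prop :=
  ∀ i j : ℕ, Relation.ReflTransGen (fun x y => a x y = 1) i j

/-- The graph is locally finite: every degree series converges. -/
def GraphLocallyFinite (a : ℕ → ℕ → ℝ) : Prop := ∀ i, Summable fun k => a k i

/-- The graph has uniformly bounded degree. -/
def UnifBoundedDegree (a : ℕ → ℕ → ℝ) : Prop := ∃ M > 0, ∀ i, deg a i ≤ M

/-- The graph is regular: all degrees are equal. -/
def GraphRegular (a : ℕ → ℕ → ℝ) : Prop := ∃ d : ℝ, ∀ i, deg a i = d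

/-- The graph is biregular: the vertex set splits as `V₁ ⊔ V₂` with every edge joining `V₁`
to `V₂` and constant degrees `d₁` on `V₁` and `d₂` on `V₂`. -/
def GraphBiregular (a : ℕ → ℕ → ℝ) : Prop :=
  ∃ (V₁ : Set ℕ) (d₁ d₂ : ℝ),
    (∀ i ∈ V₁, deg a i = d₁) ∧ (∀ i ∉ V₁, deg a i = d₂) ∧
    ∀ i k, a k i = 1 → ((i ∈ V₁ ∧ k ∉ V₁) ∨ (i ∉ V₁ ∧ k ∈ V₁))

/-- `p` is the product `v ⋆ w` in the Hilbert evolution algebra `A(G)`: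
`p_k = ∑_i v_i w_i a_{ki}` with all series convergent. -/
def IsStarProd (a : ℕ → ℕ → ℝ) (v w p : l2) : Prop :=
  (∀ k, Summable fun i => v i * w i * a k i) ∧
  ∀ k, p k = ∑' i, v i * w i * a k i

/-- `p` is the product `v ∘ w` in the Hilbert evolution algebra `A_RW(G)`:
`p_k = ∑_i v_i w_i a_{ki}/deg(i)` with all series convergent. -/
def IsRWProd (a : ℕ → ℕ → ℝ) (v w p : l2) : Prop :=
  (∀ k, Summable fun i => v i * w i * (a k i / deg a i)) ∧
  ∀ k, p k = ∑' i, v i * w i * (a k i / deg a i)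

/-- The graph is non-singular: the adjacency operator `(A v)_k = ∑_i a_{ki} v_i` on ℓ²(ℕ)
has trivial kernel. -/
def NonSingular (a : ℕ → ℕ → ℝ) : Prop :=
  ∀ v : l2, (∀ k, ∑' i, a k i * v i = 0) → v = 0

/-- The standard orthonormal basis vector `δ_i` of ℓ²(ℕ). -/
def delta (i : ℕ) : l2 := lp.single 2 i (1 : ℝ)

section LpSpace

variable {ι κ : Type*} {p : ℝ≥0∞} [Fact (1 ≤ p)] {E : κ → Type*} [∀ k, NormedAddCommGroup (E k)]

theorem hasSum_lp_apply {f : ι → lp E p} {q : lp E p} (hf : HasSum f q) (k : κ) :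
    HasSum (fun i => f i k) (q k) :=
  hf.map ((Pi.evalAddMonoidHom E k).comp (lp E p).subtype)
    (lp.lipschitzWith_one_eval p k).continuous

variable {𝕜 : Type*} [NontriviallyNormedField 𝕜] [∀ k, NormedSpace 𝕜 (E k)]

theorem exists_lp_equiv_apply_eq_smul {c : κ → 𝕜} (hc : ∀ k, c k ≠ 0)
    (hbdd : Bornology.IsBounded (Set.range c))
    (hbdd_inv : Bornology.IsBounded (Set.range fun k => (c k)⁻¹)) :
    ∃ f : lp E p ≃L[𝕜] lp E p, ∀ v k, f v k = c k • v k := by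
  let T (b : κ → 𝕜) (k : κ) : E k →L[𝕜] E k := b k • ContinuousLinearMap.id 𝕜 (E k)
  have exists_bound {b : κ → 𝕜} (hb : Bornology.IsBounded (Set.range b)) :
      ∃ K, 0 ≤ K ∧ ∀ k, ‖T b k‖ ≤ K := by
    obtain ⟨K, hK⟩ := hb.exists_norm_le
    refine ⟨max K 0, le_max_right _ _, fun k => ?_⟩
    calc ‖T b k‖ ≤ ‖b k‖ * 1 :=
          (norm_smul_le _ _).trans (by gcongr; exact ContinuousLinearMap.norm_id_le)
      _ ≤ max K 0 := by rw [mul_one]; exact (hK _ ⟨k, rfl⟩).trans (le_max_left _ _)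
  obtain ⟨K, hK, hTK⟩ := exists_bound hbdd
  obtain ⟨L, hL, hTL⟩ := exists_bound hbdd_inv
  refine ⟨.equivOfInverse (lp.mapCLM p (T c) hK hTK) (lp.mapCLM p _ hL hTL)
    (fun v => ?_) (fun v => ?_), fun v k => ?_⟩
  · ext k
    simp [T, smul_smul, hc k]
  · ext k
    simp [T, smul_smul, hc k]
  · simp [T]

end LpSpace

section Products

variable {a : ℕ → ℕ → ℝ}

theorem exists_isStarProd (hnn : ∀ k i, 0 ≤ a k i) (hlf : GraphLocallyFinite a)
    (hubd : UnifBoundedDegree a) (v w : l2) : ∃ q : l2, IsStarProd a v w q := by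
  obtain ⟨M, -, hM⟩ := hubd
  have column_mem (i : ℕ) : Memℓp (fun k => a k i) 1 := memℓp_gen <| by
    simpa [abs_of_nonneg (hnn _ _)] using hlf i
  let b (i : ℕ) : lp (fun _ : ℕ => ℝ) 1 := ⟨fun k => a k i, column_mem i⟩
  have norm_b (i : ℕ) : ‖b i‖ = deg a i := by
    rw [lp.norm_eq_tsum_rpow (by simp)]
    simp [b, abs_of_nonneg (hnn _ _), deg]
  have summable_coeff : Summable fun i => ‖v i‖ * ‖w i‖ :=
    lp.summable_mul (Real.holderConjugate_iff.2 (by norm_num)) v w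
  have summable_columns : Summable fun i => (v i * w i) • b i :=
    .of_norm_bounded (summable_coeff.mul_right M) fun i => by
      rw [norm_smul, norm_mul, norm_b]
      gcongr
      exact hM i
  have hasSum_coord := hasSum_lp_apply summable_columns.hasSum
  exact ⟨⟨_, (lp.memℓp (∑' i, (v i * w i) • b i)).of_exponent_ge one_le_two⟩,
    fun k => (hasSum_coord k).summable, fun k => (hasSum_coord k).tsum_eq.symm⟩

theorem IsStarProd.unique {v w p q : l2} (hp : IsStarProd a v w p) (hq : IsStarProd a v w q) :
    p = q := by
  ext k
  rw [hp.2, hq.2]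

/-- The weights `c` for which the diagonal map `v ↦ (c_i v_i)_i` turns the product of `A_RW(G)`
into that of `A(G)`. The edge from `i` to `k` is the nonzero coefficient `a k i`, and
`c_k / deg(i) = c_i ^ 2` is written without division. -/
def IsIntertwiningWeight (a : ℕ → ℕ → ℝ) (c : ℕ → ℝ) : Prop :=
  ∀ k i, a k i ≠ 0 → c k = deg a i * c i ^ 2

theorem IsIntertwiningWeight.isStarProd_iff_isRWProd {c : ℕ → ℝ} (hw : IsIntertwiningWeight a c)
    (hc : ∀ i, c i ≠ 0) {f : l2 → l2} (hf : ∀ v i, f v i = c i * v i) {v w p : l2} :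
    IsStarProd a (f v) (f w) (f p) ↔ IsRWProd a v w p := by
  have term_eq (k i : ℕ) :
      f v i * f w i * a k i = c k * (v i * w i * (a k i / deg a i)) := by
    rcases eq_or_ne (a k i) 0 with h | h
    · simp [h]
    · have hck := hw k i h
      have hdeg : deg a i ≠ 0 := left_ne_zero_of_mul (hck ▸ hc k)
      rw [hf, hf, hck]
      field_simp
  simp only [IsStarProd, IsRWProd, term_eq, summable_mul_left_iff (hc _), tsum_mul_left, hf p,
    mul_right_inj' (hc _)]

end Products

section Graphs

variable {a : ℕ → ℕ → ℝ}

theorem Connected.exists_adj (hconn : Connected a) (i : ℕ) : ∃ k, a k i = 1 := by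
  rcases (hconn (i + 1) i).cases_tail with h | ⟨k, -, hk⟩
  · omega
  · exact ⟨k, hk⟩

theorem deg_pos (hnn : ∀ k i, 0 ≤ a k i) (hlf : GraphLocallyFinite a) {k i : ℕ}
    (hki : 0 < a k i) : 0 < deg a i :=
  (hlf i).tsum_pos (fun j => hnn j i) k hki

theorem GraphRegular.unifBoundedDegree (hreg : GraphRegular a) : UnifBoundedDegree a := by
  obtain ⟨d, hd⟩ := hreg
  exact ⟨max d 1, by positivity, fun i => (hd i).trans_le (le_max_left _ _)⟩

theorem GraphBiregular.unifBoundedDegree (hbireg : GraphBiregular a) : UnifBoundedDegree a := by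
  obtain ⟨V, d₁, d₂, hd₁, hd₂, -⟩ := hbireg
  refine ⟨max (max d₁ d₂) 1, by positivity, fun i => ?_⟩
  by_cases hi : i ∈ V
  · simp [hd₁ i hi]
  · simp [hd₂ i hi]

theorem GraphRegular.exists_isIntertwiningWeight (hreg : GraphRegular a)
    (hpos : ∀ i, 0 < deg a i) :
    ∃ c : ℕ → ℝ, (∀ i, c i ≠ 0) ∧ (Set.range c).Finite ∧ IsIntertwiningWeight a c := by
  obtain ⟨d, hd⟩ := hreg
  have hd0 : d ≠ 0 := hd 0 ▸ (hpos 0).ne'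
  refine ⟨fun _ => d⁻¹, fun _ => inv_ne_zero hd0, Set.finite_range_const, fun k i _ => ?_⟩
  rw [hd]
  field_simp

theorem exists_pos_eq_mul_sq {d₁ d₂ : ℝ} (h₁ : 0 < d₁) (h₂ : 0 < d₂) :
    ∃ c₁ c₂ : ℝ, 0 < c₁ ∧ 0 < c₂ ∧ c₂ = d₁ * c₁ ^ 2 ∧ c₁ = d₂ * c₂ ^ 2 := by
  -- In terms of the cube roots `x ^ 3 = d₁` and `y ^ 3 = d₂` the solution is rational.
  obtain ⟨x, hx, rfl⟩ : ∃ x : ℝ, 0 < x ∧ x ^ 3 = d₁ :=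
    ⟨d₁ ^ ((3 : ℕ) : ℝ)⁻¹, by positivity, Real.rpow_inv_natCast_pow h₁.le three_ne_zero⟩
  obtain ⟨y, hy, rfl⟩ : ∃ y : ℝ, 0 < y ∧ y ^ 3 = d₂ :=
    ⟨d₂ ^ ((3 : ℕ) : ℝ)⁻¹, by positivity, Real.rpow_inv_natCast_pow h₂.le three_ne_zero⟩
  refine ⟨(x ^ 2 * y)⁻¹, (x * y ^ 2)⁻¹, by positivity, by positivity, ?_, ?_⟩ <;> field_simp

open Classical in
theorem GraphBiregular.exists_isIntertwiningWeight (h01 : ∀ k i, a k i = 0 ∨ a k i = 1)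
    (hbireg : GraphBiregular a) (hpos : ∀ i, 0 < deg a i) :
    ∃ c : ℕ → ℝ, (∀ i, c i ≠ 0) ∧ (Set.range c).Finite ∧ IsIntertwiningWeight a c := by
  obtain ⟨V, d₁, d₂, hd₁, hd₂, hV⟩ := hbireg
  obtain ⟨hd₁_pos, hd₂_pos⟩ : 0 < d₁ ∧ 0 < d₂ := by
    obtain ⟨k, hk⟩ : ∃ k, a k 0 ≠ 0 := by
      by_contra! h
      exact (hpos 0).ne' (by simp [deg, h])
    rcases hV 0 k ((h01 k 0).resolve_left hk) with ⟨hi, hk⟩ | ⟨hi, hk⟩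
    · exact ⟨hd₁ 0 hi ▸ hpos 0, hd₂ k hk ▸ hpos k⟩
    · exact ⟨hd₁ k hk ▸ hpos k, hd₂ 0 hi ▸ hpos 0⟩
  obtain ⟨c₁, c₂, hc₁, hc₂, h₁₂, h₂₁⟩ := exists_pos_eq_mul_sq hd₁_pos hd₂_pos
  refine ⟨fun i => if i ∈ V then c₁ else c₂, fun i => ?_, ?_, fun k i hki => ?_⟩
  · by_cases hi : i ∈ V <;> simp [hi, hc₁.ne', hc₂.ne']
  · exact Set.finite_range_ite Set.finite_range_const Set.finite_range_const
  · rcases hV i k ((h01 k i).resolve_left hki) with ⟨hi, hk⟩ | ⟨hi, hk⟩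
    · simpa only [hi, hk, if_true, if_false, hd₁ i hi] using h₁₂
    · simpa only [hi, hk, if_true, if_false, hd₂ i hi] using h₂₁

end Graphs

/-- Here `a k i` is the coefficient of the directed edge from `i` to `k`, so that `deg` is the
out-degree. -/
theorem exists_iso_of_regular_or_biregular_general
    (a : ℕ → ℕ → ℝ)
    (h01 : ∀ k i, a k i = 0 ∨ a k i = 1) (hout : ∀ i, ∃ k, a k i = 1)
    (hlf : GraphLocallyFinite a) (hreg : GraphRegular a ∨ GraphBiregular a) :
    ∃ f : l2 ≃L[ℝ] l2,
      (∀ v w : l2, ∃ p : l2, IsRWProd a v w p) ∧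
      (∀ v w : l2, ∃ q : l2, IsStarProd a v w q) ∧
      (∀ v w p q : l2, IsRWProd a v w p → IsStarProd a (f v) (f w) q → f p = q) := by
  have hnn (k i : ℕ) : 0 ≤ a k i := by rcases h01 k i with h | h <;> simp [h]
  have hpos (i : ℕ) : 0 < deg a i :=
    (hout i).elim fun k hk => deg_pos hnn hlf (hk ▸ one_pos)
  have hubd : UnifBoundedDegree a := hreg.elim (·.unifBoundedDegree) (·.unifBoundedDegree)
  obtain ⟨c, hc, hfin, hw⟩ := hreg.elim (·.exists_isIntertwiningWeight hpos)
    (·.exists_isIntertwiningWeight h01 hpos)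
  have hfin_inv : (Set.range fun i => (c i)⁻¹).Finite := Set.range_comp Inv.inv c ▸ hfin.image _
  obtain ⟨f, hf⟩ := exists_lp_equiv_apply_eq_smul (p := 2) (E := fun _ : ℕ => ℝ) hc
    hfin.isBounded hfin_inv.isBounded
  have hiff {v w p : l2} : IsStarProd a (f v) (f w) (f p) ↔ IsRWProd a v w p :=
    hw.isStarProd_iff_isRWProd hc hf
  have hstar := exists_isStarProd hnn hlf hubd
  refine ⟨f, fun v w => ?_, hstar, fun v w p q hp hq => (hiff.2 hp).unique hq⟩
  obtain ⟨q, hq⟩ := hstar (f v) (f w)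
  exact ⟨f.symm q, hiff.1 (by rwa [f.apply_symm_apply])⟩

/-- for a connected graph with uniformly bounded degree which is regular or
biregular, there exists an isomorphism of Hilbert evolution algebras from `A_RW(G)` to
`A(G)`: a continuous linear bijection `f` with continuous inverse such that
`f(v ∘ w) = f(v) ⋆ f(w)` for all `v, w ∈ ℓ²(ℕ)` (in particular all the products are
well defined). -/
theorem exists_iso_of_regular_or_biregular
    (a : ℕ → ℕ → ℝ)
    (hadj : SimpleAdj a) (hconn : Connected a)
    (hlf : GraphLocallyFinite a) (hubd : UnifBoundedDegree a)
    (hreg : GraphRegular a ∨ GraphBiregular a) :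
    ∃ f : l2 ≃L[ℝ] l2,
      (∀ v w : l2, ∃ p : l2, IsRWProd a v w p) ∧
      (∀ v w : l2, ∃ q : l2, IsStarProd a v w q) ∧
      (∀ v w p q : l2, IsRWProd a v w p → IsStarProd a (f v) (f w) q → f p = q) := by
  exact exists_iso_of_regular_or_biregular_general a hadj.1 hconn.exists_adj hlf hreg
end
end

section
/- Let G be a connected graph on ℕ with uniformly bounded degree which is non-singular (the bounded adjacency operator A on ℓ²(ℕ), (A v)_k = ∑_i a_{ki} v_i, has trivial kernel). If f : ℓ²(ℕ) → ℓ²(ℕ) is a continuous linear map satisfying f(v ∘ w) = f(v) ⋆ f(w) for all v, w ∈ ℓ²(ℕ), then either f is the zero map or f is injective. -/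
/-!
If `v` and `w` have disjoint supports then `v ∘ w = 0`, so the adjacency operator kills the
pointwise product of `f v` and `f w`, which is therefore zero. Taking `w = δ_j` and subtracting
from `v` its `j`-th component gives `f v · f δ_j = v_j (f δ_j)²` pointwise, so a `v` in the kernel
of `f` vanishes at every `j` with `f δ_j ≠ 0`. If no `f δ_j` vanishes, `f` is injective. If
`f δ_i = 0`, then `δ_i ∘ δ_i` lies in the kernel, so `f δ_k = 0` for every neighbour `k` of `i`;
by connectedness `f` kills every basis vector, hence is zero by continuity.
-/

noncomputable section
open scoped ENNReal

open scoped lp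

section EvolutionAlgebra

variable {ι κ 𝕜 : Type*} [RCLike 𝕜]

/-- `p` is the product of `v` and `w` in the Hilbert evolution algebra on `ℓ²(ι, 𝕜)` with structure
matrix `c`, that is `δ_i δ_i = ∑_k c_{ki} δ_k` and `δ_i δ_j = 0` for `i ≠ j`. It is a relation so
that no value is assigned to a product whose series diverges or leaves `ℓ²(ι, 𝕜)`. -/
def IsEvolProd (c : ι → ι → 𝕜) (v w p : ℓ²(ι, 𝕜)) : Prop :=
  ∀ k, HasSum (fun i => v i * w i * c k i) (p k)

/-- The multiplication of the Hilbert evolution algebra with structure matrix `c` is defined on all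
of `ℓ²(ι, 𝕜)`. -/
def HasEvolProds (c : ι → ι → 𝕜) : Prop :=
  ∀ v w : ℓ²(ι, 𝕜), ∃ p, IsEvolProd c v w p

/-- The matrix `c`, as an operator on the vectors of `ℓ²(ι, 𝕜)` where its series converge, has
trivial kernel. -/
def HasTrivialKernel (c : ι → ι → 𝕜) : Prop :=
  ∀ v : ℓ²(ι, 𝕜), (∀ k, HasSum (fun i => c k i * v i) 0) → v = 0

/-- `f` is multiplicative from the Hilbert evolution algebra with structure matrix `b` to the one
with structure matrix `c`, wherever the products exist. -/
def IsEvolHom (b : ι → ι → 𝕜) (c : κ → κ → 𝕜) (f : ℓ²(ι, 𝕜) → ℓ²(κ, 𝕜)) : Prop :=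
  ∀ v w p q, IsEvolProd b v w p → IsEvolProd c (f v) (f w) q → f p = q

theorem isEvolProd_zero {c : ι → ι → 𝕜} {v w : ℓ²(ι, 𝕜)} (h : ∀ i, v i * w i = 0) :
    IsEvolProd c v w 0 := fun k => by simp [h, hasSum_zero]

/-- The basis vector `δ_j` of `ℓ²(ι, 𝕜)`; for `ι = ℕ` and `𝕜 = ℝ` this is `delta j`. -/
abbrev basisVec (𝕜 : Type*) [RCLike 𝕜] [DecidableEq ι] (j : ι) : ℓ²(ι, 𝕜) := lp.single 2 j 1

theorem isEvolProd_basisVec_self [DecidableEq ι] {c : ι → ι → 𝕜} (j : ι)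
    (hc : Memℓp (fun k => c k j) 2) :
    IsEvolProd c (basisVec 𝕜 j) (basisVec 𝕜 j) ⟨fun k => c k j, hc⟩ := fun k => by
  have h := hasSum_single (f := fun i => basisVec 𝕜 j i * basisVec 𝕜 j i * c k i) j
    fun i hi => by simp [hi]
  simpa using h

theorem memℓp_one_mul (x y : ℓ²(ι, 𝕜)) : Memℓp (fun i => x i * y i) 1 :=
  (lp.memℓp x).holder 1 (lp.memℓp y) (fun _ => ContinuousLinearMap.mul 𝕜 𝕜) (K := 1) (by simp)

theorem hasEvolProds_of_norm_column_le {C : ℝ} (s : ι → ℓ²(ι, 𝕜)) (hs : ∀ i, ‖s i‖ ≤ C) :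
    HasEvolProds fun k i => s i k := fun x y => by
  have hxy : Summable fun i => ‖x i * y i‖ := by
    simpa using (memℓp_one_mul x y).summable (by simp)
  have hsum : Summable fun i => (x i * y i) • s i :=
    .of_norm_bounded (hxy.mul_right C) fun i => by
      rw [norm_smul]
      gcongr
      exact hs i
  exact ⟨_, fun k => hsum.hasSum.mapL (lp.evalCLM 𝕜 (fun _ => 𝕜) 2 k)⟩

namespace IsEvolHom

variable {b : ι → ι → 𝕜} {c : κ → κ → 𝕜} {f : ℓ²(ι, 𝕜) →ₗ[𝕜] ℓ²(κ, 𝕜)}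

theorem map_mul_map_eq_zero (hf : IsEvolHom b c f) (hc : HasEvolProds c)
    (hker : HasTrivialKernel c) {v w : ℓ²(ι, 𝕜)} (hvw : ∀ i, v i * w i = 0) (n : κ) :
    f v n * f w n = 0 := by
  obtain ⟨q, hq⟩ := hc (f v) (f w)
  obtain rfl : 0 = q := by simpa using hf v w 0 q (isEvolProd_zero hvw) hq
  let u : ℓ²(κ, 𝕜) := ⟨_, (memℓp_one_mul (f v) (f w)).of_exponent_ge one_le_two⟩
  have hu : u = 0 := hker u fun k => (hq k).congr_fun fun i => mul_comm _ _
  exact congrFun (congrArg (⇑) hu) n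

variable [DecidableEq ι]

theorem map_mul_map_basisVec (hf : IsEvolHom b c f) (hc : HasEvolProds c)
    (hker : HasTrivialKernel c) (v : ℓ²(ι, 𝕜)) (j : ι) (n : κ) :
    f v n * f (basisVec 𝕜 j) n = v j * f (basisVec 𝕜 j) n ^ 2 := by
  have hdisj : ∀ i, (v - v j • basisVec 𝕜 j) i * basisVec 𝕜 j i = 0 := fun i => by
    obtain rfl | hij := eq_or_ne i j
    · rw [lp.coeFn_sub, Pi.sub_apply]
      simp
    · simp [hij]
  have h := hf.map_mul_map_eq_zero hc hker hdisj n
  simp only [map_sub, map_smul, lp.coeFn_sub, lp.coeFn_smul, Pi.sub_apply, Pi.smul_apply,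
    smul_eq_mul] at h
  linear_combination h

theorem map_basisVec_eq_zero_of_map_eq_zero (hf : IsEvolHom b c f) (hc : HasEvolProds c)
    (hker : HasTrivialKernel c) {v : ℓ²(ι, 𝕜)} (hv : f v = 0) {j : ι} (hj : v j ≠ 0) :
    f (basisVec 𝕜 j) = 0 := by
  ext n
  simpa [hv, hj] using hf.map_mul_map_basisVec hc hker v j n

theorem map_basisVec_eq_zero_of_ne_zero (hf : IsEvolHom b c f) (hc : HasEvolProds c)
    (hker : HasTrivialKernel c) {j k : ι} (hb : Memℓp (fun i => b i j) 2) (hkj : b k j ≠ 0)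
    (hj : f (basisVec 𝕜 j) = 0) : f (basisVec 𝕜 k) = 0 := by
  have hcol : f ⟨fun i => b i j, hb⟩ = 0 :=
    hf _ _ _ 0 (isEvolProd_basisVec_self j hb) (isEvolProd_zero (by simp [hj]))
  exact hf.map_basisVec_eq_zero_of_map_eq_zero hc hker hcol hkj

end IsEvolHom

theorem eq_zero_of_map_basisVec_eq_zero [DecidableEq ι] {E : Type*} [AddCommMonoid E]
    [Module 𝕜 E] [TopologicalSpace E] [T2Space E] {f : ℓ²(ι, 𝕜) →L[𝕜] E}
    (h : ∀ j, f (basisVec 𝕜 j) = 0) : f = 0 :=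
  lp.ext_continuousLinearMap (by simp) fun j => by
    ext1
    simpa using h j

theorem homomorphism_zero_or_injective_general {b : ι → ι → 𝕜} {c : κ → κ → 𝕜}
    (hb : ∀ j, Memℓp (fun i => b i j) 2)
    (hconn : ∀ i j, Relation.ReflTransGen (fun x y => b x y ≠ 0) i j)
    (hc : HasEvolProds c) (hker : HasTrivialKernel c)
    (f : ℓ²(ι, 𝕜) →L[𝕜] ℓ²(κ, 𝕜)) (hf : IsEvolHom b c f) :
    f = 0 ∨ Function.Injective f := by
  classical
  replace hf : IsEvolHom b c (f : ℓ²(ι, 𝕜) →ₗ[𝕜] ℓ²(κ, 𝕜)) := hf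
  by_cases hzero : ∃ j, f (basisVec 𝕜 j) = 0
  · obtain ⟨j, hj⟩ := hzero
    refine .inl <| eq_zero_of_map_basisVec_eq_zero fun i => ?_
    induction hconn i j using Relation.ReflTransGen.head_induction_on with
    | refl => exact hj
    | head hxy _ ih => exact hf.map_basisVec_eq_zero_of_ne_zero hc hker (hb _) hxy ih
  · refine .inr <| (injective_iff_map_eq_zero f).2 fun v hv => ?_
    ext j
    by_contra hj
    exact hzero ⟨j, hf.map_basisVec_eq_zero_of_map_eq_zero hc hker hv hj⟩

end EvolutionAlgebra

section Graph

variable {a : ℕ → ℕ → ℝ}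

/-- The transition matrix of the simple random walk on the graph with adjacency coefficients `a`,
which is the structure matrix of `A_RW(G)`; column `i` is the law of the step from `i`. -/
def rwMatrix (a : ℕ → ℕ → ℝ) (k i : ℕ) : ℝ := a k i / deg a i

theorem isEvolProd_iff_isStarProd {v w p : l2} : IsEvolProd a v w p ↔ IsStarProd a v w p :=
  ⟨fun h => ⟨fun k => (h k).summable, fun k => (h k).tsum_eq.symm⟩,
    fun h k => (h.1 k).hasSum_iff.2 (h.2 k).symm⟩

theorem isEvolProd_rwMatrix_iff_isRWProd {v w p : l2} :
    IsEvolProd (rwMatrix a) v w p ↔ IsRWProd a v w p :=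
  isEvolProd_iff_isStarProd

theorem isEvolHom_rwMatrix_iff {f : l2 → l2} : IsEvolHom (rwMatrix a) a f ↔
    ∀ v w p q : l2, IsRWProd a v w p → IsStarProd a (f v) (f w) q → f p = q := by
  simp only [IsEvolHom, isEvolProd_rwMatrix_iff_isRWProd, isEvolProd_iff_isStarProd (a := a)]

theorem NonSingular.hasTrivialKernel (hns : NonSingular a) : HasTrivialKernel a :=
  fun v hv => hns v fun k => (hv k).tsum_eq

namespace SimpleAdj

theorem nonneg (hadj : SimpleAdj a) (k i : ℕ) : 0 ≤ a k i := by
  rcases hadj.1 k i with h | h <;> simp [h]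

theorem sq_eq_self (hadj : SimpleAdj a) (k i : ℕ) : a k i ^ 2 = a k i := by
  rcases hadj.1 k i with h | h <;> simp [h]

theorem memℓp_column (hadj : SimpleAdj a) (hlf : GraphLocallyFinite a) (i : ℕ) :
    Memℓp (fun k => a k i) 2 :=
  memℓp_gen <| by simpa [hadj.sq_eq_self] using hlf i

theorem norm_column_sq (hadj : SimpleAdj a) (hlf : GraphLocallyFinite a) (i : ℕ) :
    ‖(⟨fun k => a k i, hadj.memℓp_column hlf i⟩ : l2)‖ ^ 2 = deg a i := by
  simpa [hadj.sq_eq_self, deg] using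
    lp.norm_rpow_eq_tsum (by simp) (⟨fun k => a k i, hadj.memℓp_column hlf i⟩ : l2)

theorem hasEvolProds (hadj : SimpleAdj a) (hlf : GraphLocallyFinite a)
    (hubd : UnifBoundedDegree a) : HasEvolProds a := by
  obtain ⟨M, -, hM⟩ := hubd
  exact hasEvolProds_of_norm_column_le (fun i => ⟨fun k => a k i, hadj.memℓp_column hlf i⟩)
    fun i => Real.le_sqrt_of_sq_le <| (hadj.norm_column_sq hlf i).trans_le (hM i)

theorem memℓp_rwMatrix_column (hadj : SimpleAdj a) (hlf : GraphLocallyFinite a) (i : ℕ) :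
    Memℓp (fun k => rwMatrix a k i) 2 := by
  simpa only [rwMatrix, div_eq_inv_mul] using (hadj.memℓp_column hlf i).const_mul (deg a i)⁻¹

theorem rwMatrix_ne_zero (hadj : SimpleAdj a) (hlf : GraphLocallyFinite a) {k i : ℕ}
    (hki : a k i = 1) : rwMatrix a k i ≠ 0 := by
  have hdeg : 0 < deg a i := (hlf i).tsum_pos (fun m => hadj.nonneg m i) k (by simp [hki])
  simp [rwMatrix, hki, hdeg.ne']

end SimpleAdj

end Graph

/-- for a connected non-singular graph with uniformly bounded degree, every
continuous linear map `f : ℓ² → ℓ²` satisfying `f(v ∘ w) = f(v) ⋆ f(w)` (a homomorphism of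
Hilbert evolution algebras from `A_RW(G)` to `A(G)`) is either the zero map or injective. -/
theorem homomorphism_zero_or_injective
    (a : ℕ → ℕ → ℝ)
    (hadj : SimpleAdj a) (hconn : Connected a)
    (hlf : GraphLocallyFinite a) (hubd : UnifBoundedDegree a)
    (hns : NonSingular a)
    (f : l2 →L[ℝ] l2)
    (hf : ∀ v w p q : l2, IsRWProd a v w p → IsStarProd a (f v) (f w) q → f p = q) :
    f = 0 ∨ Function.Injective f :=
  homomorphism_zero_or_injective_general (hadj.memℓp_rwMatrix_column hlf)
    (fun i j => Relation.ReflTransGen.mono (fun _ _ => hadj.rwMatrix_ne_zero hlf) i j (hconn i j))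
    (hadj.hasEvolProds hlf hubd) hns.hasTrivialKernel f (isEvolHom_rwMatrix_iff.2 hf)
end
end

section
/- Let G be a connected graph on ℕ with uniformly bounded degree and deg(i) ≥ 1 for all i. Suppose there exists an isomorphism of Hilbert evolution algebras f from A(G) to A_RW(G) (a continuous linear bijection with continuous inverse satisfying f(v ⋆ w) = f(v) ∘ f(w) for all v, w) of the form f(δ_i) = α_i δ_{π(i)} for all i ∈ ℕ, where each α_i ≠ 0 and π : ℕ → ℕ is a bijection. Then G is a regular graph or a biregular graph. -/
/-!
Comparing coordinates in `f (δ_i ⋆ δ_i) = f δ_i ∘ f δ_i` gives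
`α_k a_{ki} = α_i² a_{π(k)π(i)} / deg (π i)` for all `i, k`. Since the `α`'s do not vanish, `π`
preserves adjacency, hence degrees, and `α_k = α_i² / deg i` along each edge. Put
`β_i = α_i² / deg i`, the common weight of all neighbours of `i`. Crossing an edge swaps `α` and
`β`, so by connectedness the unordered pair `{α_i, β_i} = {x, y}` does not depend on `i`, and
`deg i = α_i² / β_i` is `x² / y` or `y² / x` according to whether `α_i` is `x` or `y`. If `x = y`
the graph is regular; otherwise the level sets of `α` form the bipartition of a biregular graph.
-/

noncomputable section
open scoped ENNReal

section Graph

lemma sym2_eq_of_reflTransGen {V X : Type*} {r : V → V → Prop} (hr : ∀ i k, r i k → r k i)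
    {w b : V → X} (hwb : ∀ i k, r i k → w k = b i) {i j : V}
    (hij : Relation.ReflTransGen r i j) : s(w i, b i) = s(w j, b j) := by
  induction hij with
  | refl => rfl
  | tail _ hjk ih => rw [ih, hwb _ _ hjk, ← hwb _ _ (hr _ _ hjk), Sym2.eq_swap]

lemma regular_or_biregular_of_neighbor_label {X : Type*} {a : ℕ → ℕ → ℝ}
    (hsymm : ∀ k i, a k i = a i k) (hconn : Connected a) {w b : ℕ → X}
    (hwb : ∀ i k, a k i = 1 → w k = b i) {F : X → X → ℝ} (hF : ∀ i, deg a i = F (w i) (b i)) :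
    GraphRegular a ∨ GraphBiregular a := by
  have two_labels (i : ℕ) : w i = w 0 ∧ b i = b 0 ∨ w i = b 0 ∧ b i = w 0 :=
    Sym2.eq_iff.1 <| (sym2_eq_of_reflTransGen (fun i k h => (hsymm k i).trans h)
      (fun i k h => hwb i k ((hsymm k i).trans h)) (hconn 0 i)).symm
  by_cases h0 : w 0 = b 0
  · refine .inl ⟨F (w 0) (b 0), fun i => ?_⟩
    obtain ⟨hw, hb⟩ | ⟨hw, hb⟩ := two_labels i <;> simp only [hF, hw, hb, h0]
  · refine .inr ⟨{i | w i = w 0}, F (w 0) (b 0), F (b 0) (w 0), fun i hi => ?_, fun i hi => ?_,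
      fun i k hik => ?_⟩
    · obtain ⟨hw, hb⟩ | ⟨hw, -⟩ := two_labels i
      · rw [hF, hw, hb]
      · exact absurd (hi.symm.trans hw) h0
    · obtain ⟨hw, -⟩ | ⟨hw, hb⟩ := two_labels i
      · exact absurd hw hi
      · rw [hF, hw, hb]
    · have hk : w k = b i := hwb i k hik
      obtain ⟨hw, hb⟩ | ⟨hw, hb⟩ := two_labels i
      · exact .inl ⟨hw, fun h => h0 (h.symm.trans (hk.trans hb))⟩
      · exact .inr ⟨fun h => h0 (h.symm.trans hw), hk.trans hb⟩

variable {a : ℕ → ℕ → ℝ}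

lemma SimpleAdj.nonneg_s13 (hadj : SimpleAdj a) (k i : ℕ) : 0 ≤ a k i := by
  obtain h | h := hadj.1 k i <;> simp [h]

lemma SimpleAdj.deg_pos_of_adj (hadj : SimpleAdj a) (hlf : GraphLocallyFinite a) {k i : ℕ}
    (hki : a k i = 1) : 0 < deg a i :=
  (hlf i).tsum_pos (fun j => hadj.nonneg_s13 j i) k (hki ▸ one_pos)

lemma deg_perm_apply {π : Equiv.Perm ℕ} (hπ : ∀ i k, a (π k) (π i) = a k i) (i : ℕ) :
    deg a (π i) = deg a i := by
  simp only [deg, ← π.tsum_eq fun k => a k (π i), hπ]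

end Graph

lemma memℓp_of_summable_norm {ι : Type*} {E : ι → Type*} [∀ i, NormedAddCommGroup (E i)]
    {f : ∀ i, E i} (hf : Summable fun i => ‖f i‖) {p : ℝ≥0∞} (hp : 1 ≤ p) : Memℓp f p :=
  (memℓp_gen (p := 1) (by simpa using hf)).of_exponent_ge hp

lemma lp_apply_of_map_single {ι κ : Type*} [DecidableEq ι] [DecidableEq κ] {𝕜 : Type*}
    [NormedCommRing 𝕜] {p : ℝ≥0∞} [Fact (1 ≤ p)] (hp : p ≠ ∞)
    {f : lp (fun _ : ι => 𝕜) p →L[𝕜] lp (fun _ : κ => 𝕜) p} {π : ι → κ}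
    (hπ : Function.Injective π) {α : ι → 𝕜}
    (hf : ∀ i, f (lp.single p i 1) = α i • lp.single p (π i) 1)
    (v : lp (fun _ : ι => 𝕜) p) (k : ι) : f v (π k) = α k * v k := by
  suffices (lp.evalCLM 𝕜 (fun _ : κ => 𝕜) p (π k)).comp f =
      α k • lp.evalCLM 𝕜 (fun _ : ι => 𝕜) p k from congr($this v)
  refine lp.ext_continuousLinearMap hp fun i => ContinuousLinearMap.ext_ring ?_
  change f (lp.single p i 1) (π k) = α k * (lp.single p i 1 : lp (fun _ : ι => 𝕜) p) k
  obtain rfl | hki := eq_or_ne k i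
  · simp [hf]
  · simp [hf, hki, hπ.ne hki]

section EvolutionAlgebra

variable {a : ℕ → ℕ → ℝ}

/-- The `i`-th column of the adjacency matrix as a vector of ℓ²(ℕ), which is the square of `δ_i`
in `A(G)`. -/
def adjColumn (hlf : GraphLocallyFinite a) (i : ℕ) : l2 :=
  ⟨fun k => a k i, memℓp_of_summable_norm (hlf i).norm one_le_two⟩

lemma adjColumn_apply (hlf : GraphLocallyFinite a) (i k : ℕ) : adjColumn hlf i k = a k i := rfl

lemma hasSum_smul_delta_mul_smul_delta_mul (c d : ℝ) (i : ℕ) (g : ℕ → ℝ) :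
    HasSum (fun j => (c • delta i) j * (d • delta i) j * g j) (c * d * g i) := by
  convert hasSum_single i fun j hj => ?_ using 1
  · simp [delta]
  · simp [delta, hj]

lemma isStarProd_delta_delta (hlf : GraphLocallyFinite a) (i : ℕ) :
    IsStarProd a (delta i) (delta i) (adjColumn hlf i) := by
  have coord (k : ℕ) : HasSum (fun j => delta i j * delta i j * a k j) (adjColumn hlf i k) := by
    simpa [adjColumn_apply] using hasSum_smul_delta_mul_smul_delta_mul 1 1 i (a k)
  exact ⟨fun k => (coord k).summable, fun k => (coord k).tsum_eq.symm⟩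

lemma isRWProd_smul_delta_smul_delta (hlf : GraphLocallyFinite a) (c d : ℝ) (i : ℕ) :
    IsRWProd a (c • delta i) (d • delta i) ((c * d / deg a i) • adjColumn hlf i) := by
  have coord (k : ℕ) : HasSum (fun j => (c • delta i) j * (d • delta i) j * (a k j / deg a j))
      (((c * d / deg a i) • adjColumn hlf i) k) := by
    convert hasSum_smul_delta_mul_smul_delta_mul c d i fun j => a k j / deg a j using 1
    simp only [lp.coeFn_smul, Pi.smul_apply, smul_eq_mul, adjColumn_apply]
    ring
  exact ⟨fun k => (coord k).summable, fun k => (coord k).tsum_eq.symm⟩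

/-- Multiplicativity of a continuous linear map `f : A(G) → A_RW(G)`: `f (v ⋆ w) = f v ∘ f w`
whenever both products exist in ℓ²(ℕ). -/
def IsStarRWHom (a : ℕ → ℕ → ℝ) (f : l2 →L[ℝ] l2) : Prop :=
  ∀ v w p q : l2, IsStarProd a v w p → IsRWProd a (f v) (f w) q → f p = q

variable {f : l2 →L[ℝ] l2} {π : Equiv.Perm ℕ} {α : ℕ → ℝ}

lemma IsStarRWHom.weight_mul_adj (hmul : IsStarRWHom a f) (hlf : GraphLocallyFinite a)
    (hf : ∀ i, f (delta i) = α i • delta (π i)) (i k : ℕ) :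
    α k * a k i = α i ^ 2 / deg a (π i) * a (π k) (π i) := by
  have map_column : f (adjColumn hlf i) = (α i * α i / deg a (π i)) • adjColumn hlf (π i) :=
    hmul _ _ _ _ (isStarProd_delta_delta hlf i)
      (hf i ▸ isRWProd_smul_delta_smul_delta hlf (α i) (α i) (π i))
  calc
    α k * a k i = f (adjColumn hlf i) (π k) :=
      (lp_apply_of_map_single ENNReal.ofNat_ne_top π.injective hf (adjColumn hlf i) k).symm
    _ = α i ^ 2 / deg a (π i) * a (π k) (π i) := by rw [map_column, sq]; rfl

lemma IsStarRWHom.adj_perm_apply (hmul : IsStarRWHom a f) (hadj : SimpleAdj a)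
    (hlf : GraphLocallyFinite a) (hα : ∀ i, α i ≠ 0)
    (hf : ∀ i, f (delta i) = α i • delta (π i)) (i k : ℕ) : a (π k) (π i) = a k i := by
  have hrel := hmul.weight_mul_adj hlf hf i k
  obtain h | h := hadj.1 k i <;> obtain hπ | hπ := hadj.1 (π k) (π i)
  · rw [h, hπ]
  · exact absurd hrel.symm (by simp [h, hπ, hα, (hadj.deg_pos_of_adj hlf hπ).ne'])
  · exact absurd hrel (by simp [h, hπ, hα])
  · rw [h, hπ]

lemma IsStarRWHom.weight_eq_of_adj (hmul : IsStarRWHom a f) (hadj : SimpleAdj a)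
    (hlf : GraphLocallyFinite a) (hα : ∀ i, α i ≠ 0)
    (hf : ∀ i, f (delta i) = α i • delta (π i)) {i k : ℕ} (hki : a k i = 1) :
    α k = α i ^ 2 / deg a i := by
  have hπ := hmul.adj_perm_apply hadj hlf hα hf
  simpa [hπ, deg_perm_apply hπ, hki] using hmul.weight_mul_adj hlf hf i k

end EvolutionAlgebra

theorem regular_or_biregular_of_weighted_permutation_iso_general
    {a : ℕ → ℕ → ℝ} (hadj : SimpleAdj a) (hconn : Connected a) (hlf : GraphLocallyFinite a)
    {f : l2 →L[ℝ] l2} {π : Equiv.Perm ℕ} {α : ℕ → ℝ} (hα : ∀ i, α i ≠ 0)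
    (hf : ∀ i, f (delta i) = α i • delta (π i)) (hmul : IsStarRWHom a f) :
    GraphRegular a ∨ GraphBiregular a :=
  regular_or_biregular_of_neighbor_label (w := α) (b := fun i => α i ^ 2 / deg a i)
    (F := fun x y => x ^ 2 / y) hadj.2.1 hconn
    (fun _ _ hki => hmul.weight_eq_of_adj hadj hlf hα hf hki)
    fun i => (div_div_cancel₀ (pow_ne_zero 2 (hα i))).symm

/-- for a connected graph with uniformly bounded degree and all degrees at
least 1, if there exists an isomorphism of Hilbert evolution algebras from `A(G)` to
`A_RW(G)` of the form `f(δ_i) = α_i δ_{π(i)}` with `α_i ≠ 0` and `π` a bijection, then the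
graph is regular or biregular. -/
theorem regular_or_biregular_of_weighted_permutation_iso
    (a : ℕ → ℕ → ℝ)
    (hadj : SimpleAdj a) (hconn : Connected a)
    (hlf : GraphLocallyFinite a) (hubd : UnifBoundedDegree a)
    (hdeg : ∀ i, 1 ≤ deg a i)
    (hiso : ∃ (f : l2 ≃L[ℝ] l2) (π : Equiv.Perm ℕ) (α : ℕ → ℝ),
      (∀ i, α i ≠ 0) ∧
      (∀ i, f (delta i) = α i • delta (π i)) ∧
      (∀ v w p q : l2, IsStarProd a v w p → IsRWProd a (f v) (f w) q → f p = q)) :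
    GraphRegular a ∨ GraphBiregular a := by
  obtain ⟨f, π, α, hα, hf, hmul⟩ := hiso
  exact regular_or_biregular_of_weighted_permutation_iso_general (f := f) hadj hconn hlf hα hf hmul
end
end
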